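/- For i = 1,…,N let χ_i : ℝ → ℝ be continuous with compact support contained in [−T,T] (T > 0) and ∑_{k∈ℤ} χ_i(u−k) = 1 for every u ∈ ℝ. Let m ∈ ℕ, m ≥ 1, χ̄_{i,m}(t) := (1/m)∫_{-m/2}^{m/2} χ_i(t+v) dv. Let f : ℝ^N → ℝ be absolutely continuous in the sense of Tonelli (f ∈ BV(ℝ^N) ∩ AC_loc(ℝ^N)) and suppose that for each j = 1,…,N the a.e.-existing partial derivative ∂f/∂x_j has a representative g_j : ℝ^N → ℝ which is bounded, measurable, continuous at almost every point, satisfies ‖g_j‖_{l¹(Σ)} < +∞ for every admissible sequence Σ, and satisfies f(x'_j,b) − f(x'_j,a) = ∫_a^b g_j(x'_j,u) du for every x'_j ∈ ℝ^{N−1} and a < b. Then for every m ∈ ℕ, the multivariate generalized sampling series (S̄^m_w f)(t) := ∑_{k∈ℤ^N} f(k/w) ∏_{i=1}^N χ̄_{i,m}(w t_i − k_i) converges to f in variation: lim_{w→+∞} V[S̄^m_w f − f] = 0, where V denotes the Tonelli variation on ℝ^N. -/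

import Mathlib

/-!
The Tonelli variation of a function `h` is at most `∑ⱼ ∫ |∂ⱼh|`, so it suffices to let the partial
derivatives of the sampling series converge to those of `f` in `L¹`. Differentiating an averaged
kernel gives `1/m` times a difference of two translates of `χ_j`; hence, by summation by parts,
`∂ⱼ(S̄f)` is again a sampling series, built on another compactly supported partition of unity, whose
coefficients are difference quotients of `f`. These are local means of `g_j = ∂ⱼf`, so the series
tends to `g_j` wherever `g_j` is continuous. Finiteness of `‖g_j‖_{l¹(Σ)}` on the integer grid
provides an integrable envelope for all these means at once, and dominated convergence concludes.
-/

open MeasureTheory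
open scoped ENNReal

/-- The averaged kernel `χ̄_m(t) := (1/m) ∫_{-m/2}^{m/2} χ(t+v) dv`. -/
noncomputable def avgKernel (χ : ℝ → ℝ) (m : ℕ) (t : ℝ) : ℝ :=
  (1 / (m : ℝ)) * ∫ v in (-(m : ℝ) / 2)..((m : ℝ) / 2), χ (t + v)

/-- The point of `ℝ^N` whose `j`-th coordinate is `s` and whose remaining coordinates are
given by `x' : ℝ^{N−1}`. -/
def sect {N : ℕ} (j : Fin N) (x' : {i : Fin N // i ≠ j} → ℝ) (s : ℝ) : Fin N → ℝ :=
  fun i => if h : i = j then s else x' ⟨i, h⟩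

/-- `Φ_j(f, I)` for the interval `I = ∏ᵢ [a i, b i]`. -/
noncomputable def PhiJ (N : ℕ) (f : (Fin N → ℝ) → ℝ) (a b : Fin N → ℝ) (j : Fin N) : ℝ≥0∞ :=
  ∫⁻ x' in {x' : {i : Fin N // i ≠ j} → ℝ | ∀ i, x' i ∈ Set.Icc (a i.1) (b i.1)},
    eVariationOn (fun s => f (sect j x' s)) (Set.Icc (a j) (b j))

/-- `Φ(f, I)`: the Euclidean norm of the vector `(Φ_1(f,I), …, Φ_N(f,I))`. -/
noncomputable def PhiTot (N : ℕ) (f : (Fin N → ℝ) → ℝ) (a b : Fin N → ℝ) : ℝ≥0∞ :=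
  (∑ j : Fin N, PhiJ N f a b j ^ 2) ^ (1 / 2 : ℝ)

/-- The finite family of `N`-dimensional intervals `[A k, B k]` forms a partition of
`∏ᵢ [a i, b i]`. -/
def IsBoxPartition (N p : ℕ) (a b : Fin N → ℝ) (A B : Fin p → Fin N → ℝ) : Prop :=
  (∀ k i, a i ≤ A k i ∧ A k i ≤ B k i ∧ B k i ≤ b i) ∧
  ((Set.univ.pi fun i => Set.Icc (a i) (b i)) =
    ⋃ k, Set.univ.pi fun i => Set.Icc (A k i) (B k i)) ∧
  (∀ k l, k ≠ l → Disjoint (Set.univ.pi fun i => Set.Ioo (A k i) (B k i))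
    (Set.univ.pi fun i => Set.Ioo (A l i) (B l i)))

/-- The Tonelli variation `V_I[f]` of `f` on the interval `I = ∏ᵢ [a i, b i]`. -/
noncomputable def tonelliVarOn (N : ℕ) (f : (Fin N → ℝ) → ℝ) (a b : Fin N → ℝ) : ℝ≥0∞ :=
  ⨆ (p : ℕ) (A : Fin p → Fin N → ℝ) (B : Fin p → Fin N → ℝ)
    (_ : IsBoxPartition N p a b A B), ∑ k : Fin p, PhiTot N f (A k) (B k)

/-- The Tonelli variation `V[f]` of `f` over the whole `ℝ^N`. -/
noncomputable def tonelliVar (N : ℕ) (f : (Fin N → ℝ) → ℝ) : ℝ≥0∞ :=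
  ⨆ (a : Fin N → ℝ) (b : Fin N → ℝ) (_ : a ≤ b), tonelliVarOn N f a b

/-- Classical absolute continuity of `g` on the interval `[a,b]`. -/
def AbsContOn (g : ℝ → ℝ) (a b : ℝ) : Prop :=
  ∀ ε > (0 : ℝ), ∃ δ > (0 : ℝ), ∀ (n : ℕ) (c d : Fin n → ℝ),
    (∀ i, a ≤ c i ∧ c i ≤ d i ∧ d i ≤ b) →
    (∀ i j, i ≠ j → Disjoint (Set.Ioo (c i) (d i)) (Set.Ioo (c j) (d j))) →
    (∑ i, (d i - c i)) < δ → (∑ i, |g (d i) - g (c i)|) < ε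

/-- An admissible partition of an axis. -/
def AdmissiblePartition (x : ℤ → ℝ) : Prop :=
  (∃ δ : ℝ, 0 < δ ∧ ∀ n : ℤ, δ ≤ x n - x (n - 1)) ∧ (∃ Δ : ℝ, ∀ n : ℤ, x n - x (n - 1) ≤ Δ)

section TonelliVariation

/-- `φ` is a derivative of `h` in the `j`-th coordinate direction: on every line parallel to the
`j`-th axis, `φ` is locally integrable and `h` is a primitive of `φ`. -/
structure IsSectionPrimitive {ι : Type*} [DecidableEq ι] (j : ι) (h φ : (ι → ℝ) → ℝ) : Prop where
  intervalIntegrable : ∀ (x : ι → ℝ) (a b : ℝ),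
    IntervalIntegrable (fun u => φ (Function.update x j u)) volume a b
  sub_eq_integral : ∀ (x : ι → ℝ) (a b : ℝ),
    h (Function.update x j b) - h (Function.update x j a) = ∫ u in a..b, φ (Function.update x j u)

namespace IsSectionPrimitive

variable {ι : Type*} [DecidableEq ι] {j : ι} {h h' φ φ' : (ι → ℝ) → ℝ}

lemma sub (H : IsSectionPrimitive j h φ) (H' : IsSectionPrimitive j h' φ') :
    IsSectionPrimitive j (fun x => h x - h' x) (fun x => φ x - φ' x) where
  intervalIntegrable x a b := (H.intervalIntegrable x a b).sub (H'.intervalIntegrable x a b)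
  sub_eq_integral x a b := by
    rw [intervalIntegral.integral_sub (H.intervalIntegrable x a b) (H'.intervalIntegrable x a b),
      ← H.sub_eq_integral, ← H'.sub_eq_integral]
    ring

lemma of_measurable_of_abs_le (hφ : Measurable φ) {C : ℝ} (hC : ∀ x, |φ x| ≤ C)
    (hsub : ∀ (x : ι → ℝ) (a b : ℝ), a < b →
      h (Function.update x j b) - h (Function.update x j a) =
        ∫ u in a..b, φ (Function.update x j u)) :
    IsSectionPrimitive j h φ where
  intervalIntegrable x a b :=
    (intervalIntegrable_const (c := C)).mono_fun
      (hφ.comp (measurable_update x)).aestronglyMeasurable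
      (.of_forall fun u => (hC _).trans (le_abs_self C))
  sub_eq_integral x a b := by
    rcases lt_trichotomy a b with hab | rfl | hba
    · exact hsub x a b hab
    · simp
    · rw [intervalIntegral.integral_symm, ← hsub x b a hba, neg_sub]

lemma of_hasLineDerivAt (hφ : Continuous φ)
    (hderiv : ∀ x, HasLineDerivAt ℝ h (φ x) x (Pi.single j 1)) : IsSectionPrimitive j h φ := by
  have hcont (x : ι → ℝ) : Continuous fun u => φ (Function.update x j u) :=
    hφ.comp (continuous_const.update j continuous_id)
  refine ⟨fun x a b => (hcont x).intervalIntegrable a b, fun x a b => ?_⟩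
  refine (intervalIntegral.integral_eq_sub_of_hasDerivAt
    (f := fun u => h (Function.update x j u)) (fun u _ => ?_)
    ((hcont x).intervalIntegrable a b)).symm
  have hline (v : ℝ) : Function.update x j u + (v - u) • Pi.single j (1 : ℝ) =
      Function.update x j v := by
    ext i
    rcases eq_or_ne i j with rfl | hi <;> simp [*]
  have hzero := hderiv (Function.update x j u)
  rw [HasLineDerivAt, ← sub_self u] at hzero
  simpa only [hline] using hzero.comp_sub_const u u

end IsSectionPrimitive

lemma eVariationOn_Icc_le_lintegral_enorm {E : Type*} [NormedAddCommGroup E] [NormedSpace ℝ E]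
    {h φ : ℝ → E} (hφ : ∀ a b, h b - h a = ∫ u in a..b, φ u) (a b : ℝ) :
    eVariationOn h (Set.Icc a b) ≤ ∫⁻ u in Set.Icc a b, ‖φ u‖ₑ := by
  refine iSup_le fun ⟨n, u, hu, hus⟩ => ?_
  calc ∑ i ∈ Finset.range n, edist (h (u (i + 1))) (h (u i))
      ≤ ∑ i ∈ Finset.range n, ∫⁻ x in Set.Ioc (u i) (u (i + 1)), ‖φ x‖ₑ := by
        refine Finset.sum_le_sum fun i _ => ?_
        rw [edist_eq_enorm_sub, hφ, intervalIntegral.integral_of_le (hu i.le_succ)]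
        exact enorm_integral_le_lintegral_enorm _
    _ = ∫⁻ x in ⋃ i ∈ Finset.range n, Set.Ioc (u i) (u (i + 1)), ‖φ x‖ₑ :=
        (lintegral_biUnion_finset (fun i _ k _ hik => hu.pairwise_disjoint_on_Ioc_succ hik)
          (fun _ _ => measurableSet_Ioc) _).symm
    _ ≤ ∫⁻ x in Set.Icc a b, ‖φ x‖ₑ :=
        lintegral_mono_set <| Set.iUnion₂_subset fun i _ =>
          Set.Ioc_subset_Icc_self.trans (Set.Icc_subset_Icc (hus i).1 (hus (i + 1)).2)

variable {N : ℕ}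

lemma sect_eq_update (j : Fin N) (x' : {i : Fin N // i ≠ j} → ℝ) (s : ℝ) :
    sect j x' s = Function.update (sect j x' 0) j s := by
  ext i
  rcases eq_or_ne i j with rfl | hi <;> simp [sect, *]

lemma sect_mem_Icc_iff (j : Fin N) (x' : {i : Fin N // i ≠ j} → ℝ) (s : ℝ) (a b : Fin N → ℝ) :
    sect j x' s ∈ Set.Icc a b ↔
      (∀ i, x' i ∈ Set.Icc (a i.1) (b i.1)) ∧ s ∈ Set.Icc (a j) (b j) := by
  simp only [← Set.pi_univ_Icc, Set.mem_univ_pi, Subtype.forall]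
  refine ⟨fun h => ⟨fun i hi => by simpa [sect, hi] using h i, by simpa [sect] using h j⟩,
    fun ⟨hx', hs⟩ i => ?_⟩
  rcases eq_or_ne i j with rfl | hi
  · simpa [sect] using hs
  · simpa [sect, hi] using hx' i hi

lemma measurePreserving_sect (j : Fin N) :
    MeasurePreserving fun p : ({i : Fin N // i ≠ j} → ℝ) × ℝ => sect j p.1 p.2 := by
  have hsplit : MeasurePreserving
      (MeasurableEquiv.piEquivPiSubtypeProd (fun _ : Fin N => ℝ) (· = j)).symm := by
    convert (volume_preserving_piEquivPiSubtypeProd (fun _ : Fin N => ℝ) (· = j)).symm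
  have hunique := volume_preserving_funUnique {i : Fin N // i = j} ℝ
  have hswap := (hunique.symm.prod (.id (volume : Measure ({i : Fin N // i ≠ j} → ℝ)))).comp
    Measure.measurePreserving_swap
  exact hsplit.comp hswap

lemma lintegral_lintegral_sect (j : Fin N) {F : (Fin N → ℝ) → ℝ≥0∞} (hF : Measurable F) :
    ∫⁻ x' : {i : Fin N // i ≠ j} → ℝ, ∫⁻ s : ℝ, F (sect j x' s) = ∫⁻ x, F x := by
  have hsect := measurePreserving_sect j
  rw [← hsect.lintegral_comp hF]
  exact (lintegral_prod _ (hF.comp hsect.measurable).aemeasurable).symm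

lemma phiJ_le_setLIntegral {j : Fin N} {h φ : (Fin N → ℝ) → ℝ} (hφm : Measurable φ)
    (hφ : IsSectionPrimitive j h φ) (a b : Fin N → ℝ) :
    PhiJ N h a b j ≤ ∫⁻ x in Set.Icc a b, ‖φ x‖ₑ := by
  have hface : MeasurableSet
      {x' : {i : Fin N // i ≠ j} → ℝ | ∀ i, x' i ∈ Set.Icc (a i.1) (b i.1)} := by
    simp only [Set.ofPred_forall]
    exact .iInter fun i => measurable_pi_apply i measurableSet_Icc
  have hsection (x' : {i : Fin N // i ≠ j} → ℝ) (hx' : ∀ i, x' i ∈ Set.Icc (a i.1) (b i.1)) :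
      eVariationOn (fun s => h (sect j x' s)) (Set.Icc (a j) (b j)) ≤
        ∫⁻ s, (Set.Icc a b).indicator (fun x => ‖φ x‖ₑ) (sect j x' s) := by
    calc eVariationOn (fun s => h (sect j x' s)) (Set.Icc (a j) (b j))
        ≤ ∫⁻ s in Set.Icc (a j) (b j), ‖φ (sect j x' s)‖ₑ := by
          refine eVariationOn_Icc_le_lintegral_enorm (fun c d => ?_) _ _
          simpa only [← sect_eq_update] using hφ.sub_eq_integral (sect j x' 0) c d
      _ = ∫⁻ s, (Set.Icc a b).indicator (fun x => ‖φ x‖ₑ) (sect j x' s) := by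
          rw [← lintegral_indicator measurableSet_Icc]
          refine lintegral_congr fun s => ?_
          by_cases hs : s ∈ Set.Icc (a j) (b j)
          · rw [Set.indicator_of_mem hs,
              Set.indicator_of_mem ((sect_mem_Icc_iff j x' s a b).2 ⟨hx', hs⟩)]
          · rw [Set.indicator_of_notMem hs,
              Set.indicator_of_notMem fun h' => hs ((sect_mem_Icc_iff j x' s a b).1 h').2]
  rw [← lintegral_indicator measurableSet_Icc,
    ← lintegral_lintegral_sect j (hφm.enorm.indicator measurableSet_Icc)]
  exact (setLIntegral_mono' hface hsection).trans (setLIntegral_le_lintegral _ _)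

lemma phiTot_le_sum_phiJ (h : (Fin N → ℝ) → ℝ) (a b : Fin N → ℝ) :
    PhiTot N h a b ≤ ∑ j, PhiJ N h a b j := by
  calc PhiTot N h a b ≤ ((∑ j, PhiJ N h a b j) ^ 2) ^ (1 / 2 : ℝ) :=
        ENNReal.rpow_le_rpow (Finset.sum_sq_le_sq_sum_of_nonneg fun _ _ => zero_le) (by norm_num)
    _ = ∑ j, PhiJ N h a b j := by
        rw [← ENNReal.rpow_natCast, ← ENNReal.rpow_mul]
        norm_num

lemma sum_setLIntegral_Icc_le_of_isBoxPartition {p : ℕ} {a b : Fin N → ℝ}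
    {A B : Fin p → Fin N → ℝ} (hP : IsBoxPartition N p a b A B) (F : (Fin N → ℝ) → ℝ≥0∞) :
    ∑ k, ∫⁻ x in Set.Icc (A k) (B k), F x ≤ ∫⁻ x, F x := by
  calc ∑ k, ∫⁻ x in Set.Icc (A k) (B k), F x
      = ∑ k, ∫⁻ x in Set.univ.pi fun i => Set.Ioo (A k i) (B k i), F x :=
        Finset.sum_congr rfl fun k _ => setLIntegral_congr Measure.univ_pi_Ioo_ae_eq_Icc.symm
    _ = ∫⁻ x in ⋃ k ∈ Finset.univ, Set.univ.pi fun i => Set.Ioo (A k i) (B k i), F x :=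
        (lintegral_biUnion_finset (fun k _ l _ hkl => hP.2.2 k l hkl)
          (fun _ _ => .univ_pi fun _ => measurableSet_Ioo) _).symm
    _ ≤ ∫⁻ x, F x := setLIntegral_le_lintegral _ _

theorem tonelliVar_le_sum_lintegral_enorm {h : (Fin N → ℝ) → ℝ} {φ : Fin N → (Fin N → ℝ) → ℝ}
    (hφm : ∀ j, Measurable (φ j)) (hφ : ∀ j, IsSectionPrimitive j h (φ j)) :
    tonelliVar N h ≤ ∑ j, ∫⁻ x, ‖φ j x‖ₑ := by
  refine iSup_le fun a => iSup_le fun b => iSup_le fun _ => iSup_le fun p => iSup_le fun A =>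
    iSup_le fun B => iSup_le fun hP => ?_
  calc ∑ k, PhiTot N h (A k) (B k)
      ≤ ∑ k, ∑ j, ∫⁻ x in Set.Icc (A k) (B k), ‖φ j x‖ₑ :=
        Finset.sum_le_sum fun k _ => (phiTot_le_sum_phiJ _ _ _).trans <|
          Finset.sum_le_sum fun j _ => phiJ_le_setLIntegral (hφm j) (hφ j) _ _
    _ = ∑ j, ∑ k, ∫⁻ x in Set.Icc (A k) (B k), ‖φ j x‖ₑ := Finset.sum_comm
    _ ≤ ∑ j, ∫⁻ x, ‖φ j x‖ₑ :=
        Finset.sum_le_sum fun j _ => sum_setLIntegral_Icc_le_of_isBoxPartition hP _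

end TonelliVariation

section SamplingSeries

open Filter Topology
open scoped Pointwise

lemma exists_finset_forall_sub_eq_zero {E Λ R : Type*} [TopologicalSpace E] [AddCommGroup E]
    [IsTopologicalAddGroup E] [Zero R] {φ : Λ → E} (hφ : Tendsto φ cofinite (cocompact E))
    {K : E → R} (hK : HasCompactSupport K) {B : Set E} (hB : IsCompact B) :
    ∃ G : Finset Λ, ∀ s ∈ B, ∀ k ∉ G, K (s - φ k) = 0 := by
  have hcompact : IsCompact (B - tsupport K) := by
    simpa only [sub_eq_add_neg] using hB.add hK.isCompact.neg
  have hfin : {k | φ k ∈ B - tsupport K}.Finite := by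
    simpa using! hφ hcompact.compl_mem_cocompact
  refine ⟨hfin.toFinset, fun s hs k hk => ?_⟩
  by_contra hne
  exact hk (hfin.mem_toFinset.2 ⟨s, hs, s - φ k, subset_tsupport K hne, sub_sub_cancel _ _⟩)

variable {ι : Type*}

lemma tendsto_intCast_comp_cofinite_cocompact [Finite ι] :
    Tendsto (fun k : ι → ℤ => (Int.cast ∘ k : ι → ℝ)) cofinite (cocompact (ι → ℝ)) := by
  simpa only [coprodᵢ_cofinite, coprodᵢ_cocompact] using!
    Tendsto.pi_map_coprodᵢ fun _ : ι => Int.tendsto_coe_cofinite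

/-- The generalized sampling series `∑_{k ∈ ℤ^ι} c_k K(w t − k)` with kernel `K` and sample values
`c`, over an arbitrary finite set `ι` of coordinates. -/
noncomputable def samplingSeries (K : (ι → ℝ) → ℝ) (w : ℝ) (c : (ι → ℤ) → ℝ) (t : ι → ℝ) : ℝ :=
  ∑' k : ι → ℤ, c k * K (w • t - Int.cast ∘ k)

variable {K K' : (ι → ℝ) → ℝ} {w : ℝ} {c : (ι → ℤ) → ℝ}

lemma samplingSeries_eq_sum {t : ι → ℝ} {G : Finset (ι → ℤ)}
    (hG : ∀ k ∉ G, K (w • t - Int.cast ∘ k) = 0) :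
    samplingSeries K w c t = ∑ k ∈ G, c k * K (w • t - Int.cast ∘ k) :=
  tsum_eq_sum fun k hk => by rw [hG k hk, mul_zero]

lemma summable_mul_translate [Finite ι] (hK : HasCompactSupport K) (c : (ι → ℤ) → ℝ) (s : ι → ℝ) :
    Summable fun k : ι → ℤ => c k * K (s - Int.cast ∘ k) := by
  obtain ⟨G, hG⟩ := exists_finset_forall_sub_eq_zero tendsto_intCast_comp_cofinite_cocompact hK
    (isCompact_singleton (x := s))
  exact summable_of_ne_finset_zero (s := G) fun k hk => by rw [hG s rfl k hk, mul_zero]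

lemma samplingSeries_sub_translate [Finite ι] (hK : HasCompactSupport K) (n : ι → ℤ) (t : ι → ℝ) :
    samplingSeries (fun s => K s - K (s - Int.cast ∘ n)) w c t =
      samplingSeries K w (fun k => c k - c (k - n)) t := by
  have hshift (k : ι → ℤ) :
      w • t - Int.cast ∘ (k - n) - Int.cast ∘ n = (w • t - Int.cast ∘ k : ι → ℝ) := by
    ext i
    simp only [Pi.sub_apply, Function.comp_apply, Int.cast_sub]
    ring
  have hreindex : ∑' k : ι → ℤ, c k * K (w • t - Int.cast ∘ k - Int.cast ∘ n) =
      ∑' k : ι → ℤ, c (k - n) * K (w • t - Int.cast ∘ k) := by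
    rw [← (Equiv.subRight n).tsum_eq]
    exact tsum_congr fun k => by rw [Equiv.subRight_apply, hshift]
  have hsummable : Summable fun k : ι → ℤ => c k * K (w • t - Int.cast ∘ k - Int.cast ∘ n) := by
    simpa only [sub_right_comm (w • t)] using summable_mul_translate hK c (w • t - Int.cast ∘ n)
  simp only [samplingSeries, mul_sub, sub_mul]
  rw [(summable_mul_translate hK c _).tsum_sub hsummable, hreindex,
    (summable_mul_translate hK c _).tsum_sub
      (summable_mul_translate hK (fun k => c (k - n)) _)]

lemma const_mul_samplingSeries (a : ℝ) (t : ι → ℝ) :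
    a * samplingSeries K w c t = samplingSeries K w (fun k => a * c k) t := by
  simp only [samplingSeries, ← tsum_mul_left, mul_assoc]

lemma samplingSeries_const_mul (a : ℝ) (t : ι → ℝ) :
    samplingSeries (fun s => a * K s) w c t = a * samplingSeries K w c t := by
  simp only [samplingSeries, ← tsum_mul_left, mul_left_comm]

variable [Finite ι]

lemma continuous_samplingSeries (hKc : Continuous K) (hKs : HasCompactSupport K) (w : ℝ)
    (c : (ι → ℤ) → ℝ) : Continuous (samplingSeries K w c) := by
  have := Fintype.ofFinite ι
  refine continuous_iff_continuousAt.2 fun t => ?_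
  obtain ⟨G, hG⟩ := exists_finset_forall_sub_eq_zero tendsto_intCast_comp_cofinite_cocompact hKs
    ((isCompact_closedBall t 1).smul w)
  have hsum : Continuous fun y : ι → ℝ => ∑ k ∈ G, c k * K (w • y - Int.cast ∘ k) := by fun_prop
  refine hsum.continuousAt.congr ?_
  filter_upwards [Metric.closedBall_mem_nhds t one_pos] with y hy
  exact (samplingSeries_eq_sum (hG _ (Set.smul_mem_smul_set hy))).symm

lemma hasLineDerivAt_samplingSeries {v : ι → ℝ} (hK : HasCompactSupport K)
    (hK' : HasCompactSupport K') (hderiv : ∀ s, HasLineDerivAt ℝ K (K' s) s v) (w : ℝ)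
    (c : (ι → ℤ) → ℝ) (t : ι → ℝ) :
    HasLineDerivAt ℝ (samplingSeries K w c) (w * samplingSeries K' w c t) t v := by
  classical
  have := Fintype.ofFinite ι
  have hB := (isCompact_closedBall t 1).smul w
  obtain ⟨G, hG⟩ :=
    exists_finset_forall_sub_eq_zero tendsto_intCast_comp_cofinite_cocompact hK hB
  obtain ⟨G', hG'⟩ :=
    exists_finset_forall_sub_eq_zero tendsto_intCast_comp_cofinite_cocompact hK' hB
  have hlocal : samplingSeries K w c =ᶠ[𝓝 t]
      fun y => ∑ k ∈ G ∪ G', c k * K (w • y - Int.cast ∘ k) := by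
    filter_upwards [Metric.closedBall_mem_nhds t one_pos] with y hy
    exact samplingSeries_eq_sum fun k hk =>
      hG _ (Set.smul_mem_smul_set hy) k fun h => hk (Finset.mem_union_left _ h)
  have hterm (k : ι → ℤ) : HasLineDerivAt ℝ (fun y : ι → ℝ => K (w • y - Int.cast ∘ k))
      (w * K' (w • t - Int.cast ∘ k)) t v := by
    have hscale : HasDerivAt (fun r : ℝ => w * r) w 0 := by
      simpa using (hasDerivAt_id (0 : ℝ)).const_mul w
    have hbase := hderiv (w • t - Int.cast ∘ k)
    rw [HasLineDerivAt, ← mul_zero w] at hbase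
    refine ((hbase.comp 0 hscale).congr_deriv (mul_comm _ _)).congr_of_eventuallyEq
      (.of_forall fun r => congrArg K ?_)
    ext i
    simp only [Pi.add_apply, Pi.sub_apply, Pi.smul_apply, smul_eq_mul]
    ring
  refine HasLineDerivAt.congr_of_eventuallyEq ?_ hlocal
  rw [samplingSeries_eq_sum fun k hk => hG' _
    (Set.smul_mem_smul_set (Metric.mem_closedBall_self zero_le_one)) k
      fun h => hk (Finset.mem_union_right G h), Finset.mul_sum]
  refine HasDerivAt.fun_sum fun k _ => ?_
  exact ((hterm k).const_mul (c k)).congr_deriv (mul_left_comm _ _ _)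

lemma exists_forall_tsum_abs_translate_le (hKc : Continuous K) (hKs : HasCompactSupport K) :
    ∃ A, ∀ s : ι → ℝ, ∑' k : ι → ℤ, |K (s - Int.cast ∘ k)| ≤ A := by
  obtain ⟨G, hG⟩ := exists_finset_forall_sub_eq_zero tendsto_intCast_comp_cofinite_cocompact hKs
    (isCompact_Icc (a := (0 : ι → ℝ)) (b := 1))
  obtain ⟨C, hC⟩ := hKs.exists_bound_of_continuous hKc
  refine ⟨G.card • C, fun s => ?_⟩
  have hfract : (fun i => Int.fract (s i)) ∈ Set.Icc (0 : ι → ℝ) 1 :=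
    ⟨fun i => Int.fract_nonneg _, fun i => (Int.fract_lt_one _).le⟩
  have hshift (k : ι → ℤ) : s - Int.cast ∘ (k + fun i => ⌊s i⌋) =
      (fun i => Int.fract (s i)) - Int.cast ∘ k := by
    ext i
    simp only [Pi.sub_apply, Pi.add_apply, Function.comp_apply, Int.cast_add, ← Int.self_sub_floor]
    ring
  calc ∑' k : ι → ℤ, |K (s - Int.cast ∘ k)|
      = ∑' k : ι → ℤ, |K ((fun i => Int.fract (s i)) - Int.cast ∘ k)| := by
        rw [← (Equiv.addRight fun i => ⌊s i⌋).tsum_eq]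
        exact tsum_congr fun k => by rw [Equiv.coe_addRight, hshift]
    _ = ∑ k ∈ G, |K ((fun i => Int.fract (s i)) - Int.cast ∘ k)| :=
        tsum_eq_sum fun k hk => by rw [hG _ hfract k hk, abs_zero]
    _ ≤ G.card • C := Finset.sum_le_card_nsmul _ _ _ fun k _ => hC _

lemma abs_samplingSeries_sub_le (hK : HasCompactSupport K)
    (hK1 : ∀ s : ι → ℝ, ∑' k : ι → ℤ, K (s - Int.cast ∘ k) = 1) {A : ℝ}
    (hA : ∀ s : ι → ℝ, ∑' k : ι → ℤ, |K (s - Int.cast ∘ k)| ≤ A) {t : ι → ℝ} {γ ε : ℝ}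
    (hε : 0 ≤ ε) (hc : ∀ k, K (w • t - Int.cast ∘ k) ≠ 0 → |c k - γ| ≤ ε) :
    |samplingSeries K w c t - γ| ≤ A * ε := by
  have hcentre : samplingSeries K w c t - γ =
      ∑' k : ι → ℤ, (c k - γ) * K (w • t - Int.cast ∘ k) := by
    simp only [sub_mul]
    rw [(summable_mul_translate hK c _).tsum_sub (summable_mul_translate hK (fun _ => γ) _),
      tsum_mul_left, hK1, mul_one, samplingSeries]
  have hsummable (b : (ι → ℤ) → ℝ) :
      Summable fun k : ι → ℤ => ‖b k * K (w • t - Int.cast ∘ k)‖ :=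
    (summable_mul_translate hK b _).norm
  calc |samplingSeries K w c t - γ|
      ≤ ∑' k : ι → ℤ, ‖(c k - γ) * K (w • t - Int.cast ∘ k)‖ := by
        rw [hcentre]
        exact norm_tsum_le_tsum_norm (hsummable _)
    _ ≤ ∑' k : ι → ℤ, ‖ε * K (w • t - Int.cast ∘ k)‖ := by
        refine (hsummable _).tsum_le_tsum (fun k => ?_) (hsummable fun _ => ε)
        rw [norm_mul, norm_mul, Real.norm_of_nonneg hε]
        by_cases hk : K (w • t - Int.cast ∘ k) = 0
        · simp [hk]
        · gcongr
          exact hc k hk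
    _ = ε * ∑' k : ι → ℤ, |K (w • t - Int.cast ∘ k)| := by
        simp only [norm_mul, Real.norm_of_nonneg hε, tsum_mul_left, Real.norm_eq_abs]
    _ ≤ A * ε := by
        rw [mul_comm]
        gcongr
        exact hA _

end SamplingSeries

section Kernels

open Filter

/-- `K` is a kernel whose translates along the lattice `φ` form a partition of unity. Kernels on
`ℝ` and on `ℝ^ι` are both covered, with `φ` the embedding of `ℤ` or of `ℤ^ι`. -/
structure IsPartitionOfUnityKernel {E Λ : Type*} [TopologicalSpace E] [Sub E] (φ : Λ → E)
    (K : E → ℝ) : Prop where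
  continuous : Continuous K
  hasCompactSupport : HasCompactSupport K
  hasSum_translate : ∀ s, HasSum (fun k => K (s - φ k)) 1

variable {χ : ℝ → ℝ} {m : ℕ}

lemma IsPartitionOfUnityKernel.comp_add_const
    (hχ : IsPartitionOfUnityKernel (Int.cast : ℤ → ℝ) χ) (a : ℝ) :
    IsPartitionOfUnityKernel (Int.cast : ℤ → ℝ) fun t => χ (t + a) where
  continuous := hχ.continuous.comp (continuous_add_const a)
  hasCompactSupport := hχ.hasCompactSupport.comp_homeomorph (Homeomorph.addRight a)
  hasSum_translate u := by
    simpa only [sub_add_eq_add_sub] using hχ.hasSum_translate (u + a)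

lemma hasDerivAt_avgKernel (hχ : Continuous χ) (m : ℕ) (t : ℝ) :
    HasDerivAt (avgKernel χ m) (1 / m * (χ (t + m / 2) - χ (t - m / 2))) t := by
  have hprimitive (a : ℝ) :
      HasDerivAt (fun t => ∫ u in (0 : ℝ)..t + a, χ u) (χ (t + a)) t :=
    (hχ.integral_hasStrictDerivAt 0 (t + a)).hasDerivAt.comp_add_const t a
  refine (((hprimitive (m / 2)).sub (hprimitive (-m / 2))).const_mul
    (1 / (m : ℝ))).congr_deriv ?_ |>.congr_of_eventuallyEq (.of_forall fun t => ?_)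
  · rw [neg_div, ← sub_eq_add_neg]
  · simp only [avgKernel, Pi.sub_apply, intervalIntegral.integral_comp_add_left]
    rw [intervalIntegral.integral_interval_sub_left] <;> exact hχ.intervalIntegrable _ _

lemma hasCompactSupport_avgKernel (hχ : HasCompactSupport χ) (m : ℕ) :
    HasCompactSupport (avgKernel χ m) := by
  obtain ⟨L, hL⟩ := hχ.isCompact.isBounded.subset_closedBall 0
  refine .intro (isCompact_closedBall 0 (L + m / 2)) fun t ht => ?_
  have hzero (v : ℝ) (hv : v ∈ Set.uIcc (-(m : ℝ) / 2) (m / 2)) : χ (t + v) = 0 := by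
    refine image_eq_zero_of_notMem_tsupport fun htv => ht ?_
    have hLv := hL htv
    rw [Set.uIcc_of_le (by linarith [m.cast_nonneg (α := ℝ)])] at hv
    rw [mem_closedBall_zero_iff, Real.norm_eq_abs, abs_le] at hLv ⊢
    constructor <;> linarith [hv.1, hv.2, hLv.1, hLv.2]
  rw [avgKernel, intervalIntegral.integral_congr (g := fun _ => 0) hzero]
  simp

lemma isPartitionOfUnityKernel_avgKernel
    (hχ : IsPartitionOfUnityKernel (Int.cast : ℤ → ℝ) χ) (hm : m ≠ 0) :
    IsPartitionOfUnityKernel (Int.cast : ℤ → ℝ) (avgKernel χ m) where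
  continuous := continuous_iff_continuousAt.2 fun t =>
    (hasDerivAt_avgKernel hχ.continuous m t).continuousAt
  hasCompactSupport := hasCompactSupport_avgKernel hχ.hasCompactSupport m
  hasSum_translate u := by
    obtain ⟨G, hG⟩ := exists_finset_forall_sub_eq_zero Int.tendsto_coe_cofinite
      hχ.hasCompactSupport
      ((isCompact_uIcc (a := -(m : ℝ) / 2) (b := m / 2)).image (continuous_const_add u))
    have hzero (k : ℤ) (hk : k ∉ G) : avgKernel χ m (u - k) = 0 := by
      rw [avgKernel, intervalIntegral.integral_congr (g := fun _ => 0) fun v hv => ?_]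
      · simp
      · simpa only [sub_add_eq_add_sub] using hG _ (Set.mem_image_of_mem _ hv) k hk
    have hone (v : ℝ) (hv : v ∈ Set.uIcc (-(m : ℝ) / 2) (m / 2)) :
        ∑ k ∈ G, χ (u - k + v) = 1 := by
      simp only [sub_add_eq_add_sub]
      exact (hasSum_sum_of_ne_finset_zero (hG _ (Set.mem_image_of_mem _ hv))).unique
        (hχ.hasSum_translate _)
    have hsum : ∑ k ∈ G, avgKernel χ m (u - k) = 1 := by
      simp only [avgKernel]
      rw [← Finset.mul_sum, ← intervalIntegral.integral_finsetSum,
        intervalIntegral.integral_congr hone]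
      · rw [intervalIntegral.integral_const, smul_eq_mul, mul_one, neg_div, sub_neg_eq_add,
          add_halves, one_div_mul_cancel (Nat.cast_ne_zero.2 hm)]
      · exact fun k _ => (hχ.continuous.comp (continuous_const_add _)).intervalIntegrable _ _
    exact hsum ▸ hasSum_sum_of_ne_finset_zero hzero

variable {ι : Type*} [Fintype ι]

/-- The tensor product kernel `s ↦ ∏ᵢ κᵢ(sᵢ)` on `ℝ^ι`. -/
noncomputable def prodKernel (κ : ι → ℝ → ℝ) (s : ι → ℝ) : ℝ := ∏ i, κ i (s i)

lemma prodKernel_update [DecidableEq ι] (κ : ι → ℝ → ℝ) (j : ι) (ψ : ℝ → ℝ) (s : ι → ℝ) :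
    prodKernel (Function.update κ j ψ) s = ψ (s j) * ∏ i ∈ Finset.univ.erase j, κ i (s i) := by
  rw [prodKernel, ← Finset.mul_prod_erase _ _ (Finset.mem_univ j), Function.update_self]
  congr 1
  exact Finset.prod_congr rfl fun i hi => by
    rw [Function.update_of_ne (Finset.ne_of_mem_erase hi)]

lemma hasLineDerivAt_prodKernel [DecidableEq ι] (κ : ι → ℝ → ℝ) {j : ι} {ψ : ℝ → ℝ}
    (hψ : ∀ u, HasDerivAt (κ j) (ψ u) u) (s : ι → ℝ) :
    HasLineDerivAt ℝ (prodKernel κ) (prodKernel (Function.update κ j ψ) s) s (Pi.single j 1) := by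
  have hline (r : ℝ) : prodKernel κ (s + r • Pi.single j 1) =
      κ j (s j + r) * ∏ i ∈ Finset.univ.erase j, κ i (s i) := by
    rw [prodKernel, ← Finset.mul_prod_erase _ _ (Finset.mem_univ j)]
    congr 1
    · simp
    · exact Finset.prod_congr rfl fun i hi => by simp [Finset.ne_of_mem_erase hi]
  have hbase : HasDerivAt (fun r => κ j (s j + r)) (ψ (s j)) 0 := by
    simpa only [add_zero] using (hψ (s j + 0)).comp_const_add (s j) 0
  rw [HasLineDerivAt, prodKernel_update, funext hline]
  exact hbase.mul_const _

lemma isPartitionOfUnityKernel_prodKernel {κ : ι → ℝ → ℝ}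
    (hκ : ∀ i, IsPartitionOfUnityKernel (Int.cast : ℤ → ℝ) (κ i)) :
    IsPartitionOfUnityKernel (fun k : ι → ℤ => (Int.cast ∘ k : ι → ℝ)) (prodKernel κ) where
  continuous := continuous_finsetProd _ fun i _ => (hκ i).continuous.comp (continuous_apply i)
  hasCompactSupport := by
    refine .intro (isCompact_univ_pi fun i => (hκ i).hasCompactSupport.isCompact) fun s hs => ?_
    simp only [Set.mem_univ_pi, not_forall] at hs
    obtain ⟨i, hi⟩ := hs
    exact Finset.prod_eq_zero (Finset.mem_univ i) (image_eq_zero_of_notMem_tsupport hi)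
  hasSum_translate s := by
    classical
    choose G hG using fun i => exists_finset_forall_sub_eq_zero Int.tendsto_coe_cofinite
      (hκ i).hasCompactSupport (isCompact_singleton (x := s i))
    have hzero (k : ι → ℤ) (hk : k ∉ Fintype.piFinset G) :
        prodKernel κ (s - Int.cast ∘ k) = 0 := by
      simp only [Fintype.mem_piFinset, not_forall] at hk
      obtain ⟨i, hi⟩ := hk
      exact Finset.prod_eq_zero (Finset.mem_univ i) (hG i (s i) rfl (k i) hi)
    have hone (i : ι) : ∑ k ∈ G i, κ i (s i - k) = 1 :=
      (hasSum_sum_of_ne_finset_zero (hG i (s i) rfl)).unique ((hκ i).hasSum_translate (s i))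
    have hsum : ∑ k ∈ Fintype.piFinset G, prodKernel κ (s - Int.cast ∘ k) = 1 := by
      simp only [prodKernel, Pi.sub_apply, Function.comp_apply]
      rw [← Finset.prod_univ_sum G fun i k => κ i (s i - k)]
      exact Finset.prod_eq_one fun i _ => hone i
    exact hsum ▸ hasSum_sum_of_ne_finset_zero hzero

variable [DecidableEq ι]

/-- The tensor product of the averaged kernels, with the `j`-th factor replaced by the shifted
kernel `χ_j(· + m/2)`; the `j`-th partial derivative of the product averaged kernel is `1/m` times a
difference of two translates of it. -/
noncomputable def shiftedProdKernel (χ : ι → ℝ → ℝ) (m : ℕ) (j : ι) : (ι → ℝ) → ℝ :=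
  prodKernel (Function.update (fun i => avgKernel (χ i) m) j fun s => χ j (s + m / 2))

variable {χ : ι → ℝ → ℝ}

lemma isPartitionOfUnityKernel_shiftedProdKernel
    (hχ : ∀ i, IsPartitionOfUnityKernel (Int.cast : ℤ → ℝ) (χ i)) (hm : m ≠ 0) (j : ι) :
    IsPartitionOfUnityKernel (fun k : ι → ℤ => (Int.cast ∘ k : ι → ℝ))
      (shiftedProdKernel χ m j) := by
  refine isPartitionOfUnityKernel_prodKernel fun i => ?_
  rcases eq_or_ne i j with rfl | hi
  · simpa only [Function.update_self] using (hχ i).comp_add_const (m / 2)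
  · simpa only [Function.update_of_ne hi] using isPartitionOfUnityKernel_avgKernel (hχ i) hm

lemma hasLineDerivAt_prodKernel_avgKernel (hχ : ∀ i, Continuous (χ i)) (m : ℕ) (j : ι)
    (s : ι → ℝ) :
    HasLineDerivAt ℝ (prodKernel fun i => avgKernel (χ i) m)
      (1 / m * (shiftedProdKernel χ m j s -
        shiftedProdKernel χ m j (s - Int.cast ∘ Pi.single j (m : ℤ)))) s (Pi.single j 1) := by
  convert hasLineDerivAt_prodKernel (fun i => avgKernel (χ i) m)
    (hasDerivAt_avgKernel (hχ j) m) s using 1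
  have herase : ∏ i ∈ Finset.univ.erase j,
      avgKernel (χ i) m (s i - ((Pi.single j (m : ℤ) : ι → ℤ) i : ℤ)) =
        ∏ i ∈ Finset.univ.erase j, avgKernel (χ i) m (s i) :=
    Finset.prod_congr rfl fun i hi => by simp [Finset.ne_of_mem_erase hi]
  have hshift : s j - m + m / 2 = s j - m / 2 := by ring
  simp only [shiftedProdKernel, prodKernel_update, Pi.sub_apply, Function.comp_apply, herase,
    Pi.single_eq_same, Int.cast_natCast, hshift]
  ring

lemma hasLineDerivAt_samplingSeries_avgKernel
    (hχ : ∀ i, IsPartitionOfUnityKernel (Int.cast : ℤ → ℝ) (χ i)) (hm : m ≠ 0) (j : ι) (w : ℝ)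
    (c : (ι → ℤ) → ℝ) (t : ι → ℝ) :
    HasLineDerivAt ℝ (samplingSeries (prodKernel fun i => avgKernel (χ i) m) w c)
      (samplingSeries (shiftedProdKernel χ m j) w
        (fun k => w / m * (c k - c (k - Pi.single j (m : ℤ)))) t) t (Pi.single j 1) := by
  have hK := isPartitionOfUnityKernel_prodKernel fun i =>
    isPartitionOfUnityKernel_avgKernel (hχ i) hm
  have hD := (isPartitionOfUnityKernel_shiftedProdKernel hχ hm j).hasCompactSupport
  have hD' : HasCompactSupport fun s => 1 / (m : ℝ) * (shiftedProdKernel χ m j s -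
      shiftedProdKernel χ m j (s - Int.cast ∘ Pi.single j (m : ℤ))) :=
    (hD.sub (hD.comp_homeomorph (Homeomorph.subRight _))).mul_left
  refine (hasLineDerivAt_samplingSeries hK.hasCompactSupport hD'
    (hasLineDerivAt_prodKernel_avgKernel (fun i => (hχ i).continuous) m j) w c t).congr_deriv ?_
  rw [samplingSeries_const_mul, samplingSeries_sub_translate hD, const_mul_samplingSeries,
    const_mul_samplingSeries]
  simp only [mul_one_div, ← mul_assoc]

end Kernels

section LocalMeans

variable {ι : Type*}

/-- The samples of `f` at the nodes `k/w` of the grid of mesh `1/w`. -/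
noncomputable def gridSample (f : (ι → ℝ) → ℝ) (w : ℝ) (k : ι → ℤ) : ℝ :=
  f fun i => (k i : ℝ) / w

/-- The backward difference quotient of `f` over `m` steps of length `1/w` in the `j`-th direction,
at the node `k/w`. -/
noncomputable def gridDiffQuotient [DecidableEq ι] (f : (ι → ℝ) → ℝ) (m : ℕ) (j : ι) (w : ℝ)
    (k : ι → ℤ) : ℝ :=
  w / m * (gridSample f w k - gridSample f w (k - Pi.single j (m : ℤ)))

lemma IsSectionPrimitive.gridSample_sub [DecidableEq ι] {f g : (ι → ℝ) → ℝ} {j : ι}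
    (H : IsSectionPrimitive j f g) (m : ℕ) (w : ℝ) (k : ι → ℤ) :
    gridSample f w k - gridSample f w (k - Pi.single j (m : ℤ)) =
      ∫ u in ((k j - m) / w : ℝ)..(k j / w : ℝ), g (Function.update (fun i => k i / w) j u) := by
  have hleft : (fun i => ((k - Pi.single j (m : ℤ) : ι → ℤ) i : ℝ) / w) =
      Function.update (fun i => (k i : ℝ) / w) j ((k j - m) / w) := by
    ext i
    rcases eq_or_ne i j with rfl | hi <;> simp [*]
  rw [← H.sub_eq_integral, gridSample, gridSample, hleft, Function.update_eq_self]

variable [Fintype ι]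

/-- The coefficients `c` are local means of `g` at scale `1/w`: every estimate `|g - γ| ≤ ε` valid
at distance at most `r/w` from the node `k/w` passes to `c k`. -/
def IsLocalMean (g : (ι → ℝ) → ℝ) (r w : ℝ) (c : (ι → ℤ) → ℝ) : Prop :=
  ∀ (k : ι → ℤ) (γ ε : ℝ),
    (∀ y : ι → ℝ, ‖w • y - Int.cast ∘ k‖ ≤ r → |g y - γ| ≤ ε) → |c k - γ| ≤ ε

lemma IsSectionPrimitive.isLocalMean_gridDiffQuotient [DecidableEq ι] {f g : (ι → ℝ) → ℝ} {j : ι}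
    (H : IsSectionPrimitive j f g) {m : ℕ} (hm : m ≠ 0) {w : ℝ} (hw : 0 < w) :
    IsLocalMean g m w (gridDiffQuotient f m j w) := by
  intro k γ ε hg
  have hm' : (0 : ℝ) < m := by positivity
  have hlength : (k j / w : ℝ) - (k j - m) / w = m / w := by ring
  have hab : ((k j - m) / w : ℝ) ≤ k j / w := by
    gcongr
    linarith
  have hcell (u : ℝ) (hu : u ∈ Set.uIoc ((k j - m) / w : ℝ) (k j / w)) :
      ‖w • Function.update (fun i => (k i : ℝ) / w) j u - Int.cast ∘ k‖ ≤ m := by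
    rw [Set.uIoc_of_le hab, Set.mem_Ioc, div_lt_iff₀ hw, le_div_iff₀ hw] at hu
    refine (pi_norm_le_iff_of_nonneg hm'.le).2 fun i => ?_
    rcases eq_or_ne i j with rfl | hi
    · rw [Real.norm_eq_abs, abs_le]
      simp only [Pi.sub_apply, Pi.smul_apply, Function.update_self, smul_eq_mul,
        Function.comp_apply]
      constructor <;> linarith [hu.1, hu.2]
    · simp [hi, mul_div_cancel₀ _ hw.ne']
  have hbound : ‖∫ u in ((k j - m) / w : ℝ)..(k j / w : ℝ),
      (g (Function.update (fun i => k i / w) j u) - γ)‖ ≤ ε * |(k j / w : ℝ) - (k j - m) / w| :=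
    intervalIntegral.norm_integral_le_of_norm_le_const fun u hu => hg _ (hcell u hu)
  have hmean : gridDiffQuotient f m j w k - γ = w / m *
      ∫ u in ((k j - m) / w : ℝ)..(k j / w : ℝ),
        (g (Function.update (fun i => k i / w) j u) - γ) := by
    rw [intervalIntegral.integral_sub (H.intervalIntegrable _ _ _) intervalIntegrable_const,
      intervalIntegral.integral_const, hlength, ← H.gridSample_sub, gridDiffQuotient, smul_eq_mul]
    field_simp
  rw [hlength, abs_of_pos (by positivity), Real.norm_eq_abs] at hbound
  rw [hmean, abs_mul, abs_of_pos (by positivity)]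
  calc _ ≤ w / m * (ε * (m / w)) := by gcongr
    _ = ε := by field_simp

lemma IsPartitionOfUnityKernel.exists_abs_samplingSeries_sub_le {K : (ι → ℝ) → ℝ}
    (hK : IsPartitionOfUnityKernel (fun k : ι → ℤ => (Int.cast ∘ k : ι → ℝ)) K) {r : ℝ}
    (hr : 0 ≤ r) :
    ∃ A ≥ 0, ∃ R ≥ 0, ∀ {g : (ι → ℝ) → ℝ} {w : ℝ} {c : (ι → ℤ) → ℝ} {t : ι → ℝ} {γ ε : ℝ},
      0 < w → IsLocalMean g r w c → (∀ y, ‖y - t‖ ≤ R / w → |g y - γ| ≤ ε) →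
        |samplingSeries K w c t - γ| ≤ A * ε := by
  obtain ⟨A, hA⟩ := exists_forall_tsum_abs_translate_le hK.continuous hK.hasCompactSupport
  obtain ⟨L, hL0, hL⟩ := hK.hasCompactSupport.isCompact.isBounded.exists_pos_norm_le
  refine ⟨A, (tsum_nonneg fun k => abs_nonneg _).trans (hA 0), r + L, by positivity,
    fun {g w c t γ ε} hw hc hg => ?_⟩
  have hε : 0 ≤ ε := (abs_nonneg _).trans (hg t (by rw [sub_self, norm_zero]; positivity))
  refine abs_samplingSeries_sub_le hK.hasCompactSupport
    (fun s => (hK.hasSum_translate s).tsum_eq) hA hε fun k hk => hc k γ ε fun y hy => hg y ?_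
  have hkt := hL _ (subset_tsupport K hk)
  rw [le_div_iff₀ hw]
  calc ‖y - t‖ * w = ‖w • (y - t)‖ := by rw [norm_smul, Real.norm_of_nonneg hw.le, mul_comm]
    _ = ‖(w • y - Int.cast ∘ k) - (w • t - Int.cast ∘ k)‖ := by
        rw [smul_sub, sub_sub_sub_cancel_right]
    _ ≤ r + L := (norm_sub_le _ _).trans (add_le_add hy hkt)

end LocalMeans

section Envelope

variable {ι : Type*} [Fintype ι]

lemma measurePreserving_floor :
    MeasurePreserving (fun (t : ι → ℝ) i => ⌊t i⌋) volume Measure.count := by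
  have hmeas : Measurable fun (t : ι → ℝ) i => ⌊t i⌋ :=
    measurable_pi_lambda _ fun i => (measurable_pi_apply i).floor
  refine ⟨hmeas, Measure.ext_of_singleton fun k => ?_⟩
  have hcell : (fun (t : ι → ℝ) i => ⌊t i⌋) ⁻¹' {k} =
      Set.univ.pi fun i => Set.Ico (k i : ℝ) (k i + 1) := by
    ext t
    simp [funext_iff, Int.floor_eq_iff]
  rw [Measure.map_apply hmeas (measurableSet_singleton k), hcell, Real.volume_pi_Ico,
    Measure.count_singleton]
  simp

lemma integrable_comp_floor {s : (ι → ℤ) → ℝ} (hs : Summable s) :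
    Integrable fun t : ι → ℝ => s fun i => ⌊t i⌋ :=
  measurePreserving_floor.integrable_comp_of_integrable (integrable_count_iff.2 hs.abs)

lemma norm_floor_sub_floor_le (y t : ι → ℝ) :
    ‖(fun i => ⌊y i⌋ - ⌊t i⌋ : ι → ℤ)‖ ≤ ‖y - t‖ + 1 := by
  refine (pi_norm_le_iff_of_nonneg (by positivity)).2 fun i => ?_
  have hi := abs_le.1 (norm_le_pi_norm (y - t) i)
  rw [Pi.sub_apply] at hi
  rw [Int.norm_eq_abs, abs_le]
  push_cast
  constructor <;> linarith [hi.1, hi.2, Int.floor_le (y i), Int.floor_le (t i),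
    Int.lt_floor_add_one (y i), Int.lt_floor_add_one (t i)]

lemma exists_integrable_envelope {g : (ι → ℝ) → ℝ} {s : (ι → ℤ) → ℝ} (hs : Summable s)
    (hg : ∀ y, |g y| ≤ s fun i => ⌊y i⌋) (R : ℝ) :
    ∃ H : (ι → ℝ) → ℝ, Integrable H ∧ ∀ t y, ‖y - t‖ ≤ R → |g y| ≤ H t := by
  have hs0 (k : ι → ℤ) : 0 ≤ s k := (abs_nonneg _).trans (by simpa using hg fun i => k i)
  have hfinite : (Metric.closedBall (0 : ι → ℤ) (R + 1)).Finite :=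
    (isCompact_closedBall 0 (R + 1)).finite_of_discrete
  refine ⟨fun t => ∑ e ∈ hfinite.toFinset, s ((fun i => ⌊t i⌋) + e),
    integrable_finsetSum _ fun e _ =>
      integrable_comp_floor ((Equiv.addRight e).summable_iff.2 hs), fun t y hy => ?_⟩
  have hmem : (fun i => ⌊y i⌋ - ⌊t i⌋) ∈ hfinite.toFinset := by
    rw [Set.Finite.mem_toFinset, mem_closedBall_zero_iff]
    exact (norm_floor_sub_floor_le y t).trans (by gcongr)
  calc |g y| ≤ s fun i => ⌊y i⌋ := hg y
    _ = s ((fun i => ⌊t i⌋) + fun i => ⌊y i⌋ - ⌊t i⌋) := by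
        congr 1
        ext i
        simp
    _ ≤ _ := Finset.single_le_sum (f := fun e => s ((fun i => ⌊t i⌋) + e)) (fun e _ => hs0 _) hmem

/-- `g` belongs to `Λ¹`: its norm in `l¹(Σ)` is finite for every admissible sequence `Σ`, the
product of the partitions `x i` of the axes. -/
def MemLambdaOne (g : (ι → ℝ) → ℝ) : Prop :=
  ∀ x : ι → ℤ → ℝ, (∀ i, AdmissiblePartition (x i)) →
    Summable fun k : ι → ℤ =>
      sSup {d : ℝ | ∃ y : ι → ℝ,
          (∀ i, y i ∈ Set.Ico (x i (k i - 1)) (x i (k i))) ∧ d = |g y|} *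
        ∏ i, (x i (k i) - x i (k i - 1))

lemma MemLambdaOne.exists_summable_forall_abs_le {g : (ι → ℝ) → ℝ} (hg : MemLambdaOne g) {C : ℝ}
    (hC : ∀ y, |g y| ≤ C) :
    ∃ s : (ι → ℤ) → ℝ, Summable s ∧ ∀ y, |g y| ≤ s fun i => ⌊y i⌋ := by
  have hunit := hg (fun _ n => n) fun _ =>
    ⟨⟨1, one_pos, fun n => by simp⟩, 1, fun n => by simp⟩
  have hunit_shift := (Equiv.addRight (1 : ι → ℤ)).summable_iff.2 hunit
  refine ⟨_, hunit_shift, fun y => ?_⟩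
  simp only [Function.comp_apply, Equiv.coe_addRight, Pi.add_apply, Pi.one_apply, Int.cast_sub,
    Int.cast_one, sub_sub_cancel, Finset.prod_const_one, mul_one]
  refine le_csSup ⟨C, ?_⟩ ⟨y, fun i => ?_, rfl⟩
  · rintro _ ⟨z, -, rfl⟩
    exact hC z
  · simp [Int.floor_le]

end Envelope

section Convergence

open Filter Topology

variable {ι : Type*} [Fintype ι] {K g : (ι → ℝ) → ℝ} {r : ℝ} {c : ℝ → (ι → ℤ) → ℝ}

lemma tendsto_samplingSeries_of_continuousAt
    (hK : IsPartitionOfUnityKernel (fun k : ι → ℤ => (Int.cast ∘ k : ι → ℝ)) K) (hr : 0 ≤ r)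
    (hc : ∀ w > 0, IsLocalMean g r w (c w)) {t : ι → ℝ} (ht : ContinuousAt g t) :
    Tendsto (fun w => samplingSeries K w (c w) t) atTop (𝓝 (g t)) := by
  obtain ⟨A, hA, R, -, hest⟩ := hK.exists_abs_samplingSeries_sub_le hr
  refine Metric.tendsto_nhds.2 fun ε hε => ?_
  obtain ⟨δ, hδ, hgδ⟩ := Metric.continuousAt_iff.1 ht (ε / (A + 1)) (by positivity)
  have hradius : Tendsto (fun w : ℝ => R / w) atTop (𝓝 0) :=
    tendsto_const_nhds.div_atTop tendsto_id
  filter_upwards [hradius.eventually_lt_const hδ, eventually_gt_atTop 0] with w hwδ hw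
  have hbound := hest hw (hc w hw) (t := t) (γ := g t) (ε := ε / (A + 1)) fun y hy =>
    (hgδ ((dist_eq_norm y t).trans_le hy |>.trans_lt hwδ)).le
  rw [Real.dist_eq]
  refine hbound.trans_lt ?_
  rw [mul_div_assoc', div_lt_iff₀ (by positivity)]
  linarith

theorem tendsto_lintegral_enorm_samplingSeries_sub
    (hK : IsPartitionOfUnityKernel (fun k : ι → ℤ => (Int.cast ∘ k : ι → ℝ)) K) (hr : 0 ≤ r)
    (hc : ∀ w > 0, IsLocalMean g r w (c w)) (hgm : Measurable g)
    (hgc : ∀ᵐ x, ContinuousAt g x) {s : (ι → ℤ) → ℝ} (hs : Summable s)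
    (hgs : ∀ y, |g y| ≤ s fun i => ⌊y i⌋) :
    Tendsto (fun w => ∫⁻ t, ‖samplingSeries K w (c w) t - g t‖ₑ) atTop (𝓝 0) := by
  obtain ⟨A, -, R, hR, hest⟩ := hK.exists_abs_samplingSeries_sub_le hr
  obtain ⟨H, hHint, hH⟩ := exists_integrable_envelope hs hgs R
  have hmeas (w : ℝ) : Measurable fun t => ‖samplingSeries K w (c w) t - g t‖ₑ :=
    ((continuous_samplingSeries hK.continuous hK.hasCompactSupport w (c w)).measurable.sub
      hgm).enorm
  have hdom : ∀ᶠ w in atTop, ∀ᵐ t,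
      ‖samplingSeries K w (c w) t - g t‖ₑ ≤ ENNReal.ofReal (A * H t + H t) := by
    filter_upwards [eventually_ge_atTop 1] with w hw
    refine .of_forall fun t => ?_
    have hseries := hest (one_pos.trans_le hw) (hc w (one_pos.trans_le hw)) (t := t) (γ := 0)
      (ε := H t) fun y hy => by simpa using hH t y (hy.trans (div_le_self hR hw))
    rw [sub_zero] at hseries
    rw [← ofReal_norm]
    exact ENNReal.ofReal_le_ofReal <|
      (norm_sub_le _ _).trans (add_le_add hseries (hH t t (by simpa using hR)))
  have hpointwise : ∀ᵐ t, Tendsto (fun w => ‖samplingSeries K w (c w) t - g t‖ₑ) atTop (𝓝 0) := by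
    filter_upwards [hgc] with t ht
    simpa using ((tendsto_samplingSeries_of_continuousAt hK hr hc ht).sub_const (g t)).enorm
  simpa using tendsto_lintegral_filter_of_dominated_convergence _ (.of_forall hmeas) hdom
    ((hHint.const_mul A).add hHint).lintegral_lt_top.ne hpointwise

lemma tonelliVar_samplingSeries_sub_le {N : ℕ} {χ : Fin N → ℝ → ℝ}
    (hχ : ∀ i, IsPartitionOfUnityKernel (Int.cast : ℤ → ℝ) (χ i)) {m : ℕ} (hm : m ≠ 0)
    {f : (Fin N → ℝ) → ℝ} {g : Fin N → (Fin N → ℝ) → ℝ} (hgm : ∀ j, Measurable (g j))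
    (hfg : ∀ j, IsSectionPrimitive j f (g j)) (w : ℝ) :
    tonelliVar N (fun t =>
        samplingSeries (prodKernel fun i => avgKernel (χ i) m) w (gridSample f w) t - f t) ≤
      ∑ j, ∫⁻ t,
        ‖samplingSeries (shiftedProdKernel χ m j) w (gridDiffQuotient f m j w) t - g j t‖ₑ := by
  have hcont (j : Fin N) :
      Continuous (samplingSeries (shiftedProdKernel χ m j) w (gridDiffQuotient f m j w)) :=
    have hK := isPartitionOfUnityKernel_shiftedProdKernel hχ hm j
    continuous_samplingSeries hK.continuous hK.hasCompactSupport w _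
  exact tonelliVar_le_sum_lintegral_enorm (fun j => (hcont j).measurable.sub (hgm j)) fun j =>
    (IsSectionPrimitive.of_hasLineDerivAt (hcont j) fun t =>
      hasLineDerivAt_samplingSeries_avgKernel hχ hm j w _ t).sub (hfg j)

end Convergence

/-- convergence in variation: let `χ_1,…,χ_N` be continuous one-dimensional
kernels with compact support in `[−T,T]` and `∑_{k∈ℤ} χ_i(u−k) = 1`, `m ≥ 1`, and let `f` be
absolutely continuous in the sense of Tonelli with partial derivatives admitting representatives
`g_j` which are bounded, measurable, continuous a.e., belong to `Λ¹` and are section-wise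
primitives of `f`. Then the multivariate generalized sampling series based on the product
averaged kernel converges to `f` in variation: `lim_{w→∞} V[S̄^m_w f − f] = 0`. -/
theorem sampling_series_convergence_in_variation
    (N : ℕ) (T : ℝ) (hT : 0 < T) (χ : Fin N → ℝ → ℝ)
    (hc : ∀ i, Continuous (χ i))
    (hsupp : ∀ i, ∀ s : ℝ, s ∉ Set.Icc (-T) T → χ i s = 0)
    (hpart : ∀ i, ∀ u : ℝ, HasSum (fun k : ℤ => χ i (u - (k : ℝ))) 1)
    (m : ℕ) (hm : 1 ≤ m)
    (f : (Fin N → ℝ) → ℝ) (hfm : Measurable f) (M : ℝ) (hfb : ∀ s, |f s| ≤ M)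
    (hbv : tonelliVar N f < ⊤)
    (hacloc : ∀ (j : Fin N) (a b : ℝ), a ≤ b →
      ∀ᵐ x' : {i : Fin N // i ≠ j} → ℝ, AbsContOn (fun s => f (sect j x' s)) a b)
    (g : Fin N → (Fin N → ℝ) → ℝ)
    (hgm : ∀ j, Measurable (g j)) (Mg : Fin N → ℝ) (hgb : ∀ j s, |g j s| ≤ Mg j)
    (hgc : ∀ j, ∀ᵐ x : Fin N → ℝ, ContinuousAt (g j) x)
    (hgΛ : ∀ j, ∀ x : Fin N → ℤ → ℝ, (∀ i, AdmissiblePartition (x i)) →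
      Summable (fun k : Fin N → ℤ =>
        sSup {d : ℝ | ∃ y : Fin N → ℝ,
            (∀ i, y i ∈ Set.Ico (x i (k i - 1)) (x i (k i))) ∧ d = |g j y|} *
          ∏ i, (x i (k i) - x i (k i - 1))))
    (hftc : ∀ (j : Fin N) (x : Fin N → ℝ) (a b : ℝ), a < b →
      f (Function.update x j b) - f (Function.update x j a) =
        ∫ u in a..b, g j (Function.update x j u)) :
    Filter.Tendsto
      (fun w : ℝ => tonelliVar N (fun t =>
        (∑' k : Fin N → ℤ, f (fun i => (k i : ℝ) / w) *
          ∏ i, avgKernel (χ i) m (w * t i - (k i : ℝ))) - f t))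
      Filter.atTop (nhds 0) := by
  have hχ (i : Fin N) : IsPartitionOfUnityKernel (Int.cast : ℤ → ℝ) (χ i) :=
    ⟨hc i, .intro isCompact_Icc (hsupp i), hpart i⟩
  have hm0 : m ≠ 0 := Nat.one_le_iff_ne_zero.1 hm
  have hfg (j : Fin N) : IsSectionPrimitive j f (g j) :=
    .of_measurable_of_abs_le (hgm j) (hgb j) (hftc j)
  have hderiv (j : Fin N) : Filter.Tendsto (fun w : ℝ => ∫⁻ t,
      ‖samplingSeries (shiftedProdKernel χ m j) w (gridDiffQuotient f m j w) t - g j t‖ₑ)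
      Filter.atTop (nhds 0) := by
    obtain ⟨s, hs, hgs⟩ := MemLambdaOne.exists_summable_forall_abs_le (hgΛ j) (hgb j)
    exact tendsto_lintegral_enorm_samplingSeries_sub
      (isPartitionOfUnityKernel_shiftedProdKernel hχ hm0 j) m.cast_nonneg
      (fun w hw => (hfg j).isLocalMean_gridDiffQuotient hm0 hw) (hgm j) (hgc j) hs hgs
  refine tendsto_of_tendsto_of_tendsto_of_le_of_le tendsto_const_nhds ?_ (fun _ => zero_le)
    fun w => tonelliVar_samplingSeries_sub_le hχ hm0 hgm hfg w
  simpa using tendsto_finsetSum Finset.univ fun j _ => hderiv j
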